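/- (Contraction estimate) Suppose |f(t,x) − f(t,y)| ≤ κ₃(t)·|x−y| for all t ∈ (a,b) and x, y ∈ ℝ, where κ₃: (a,b) → [0,∞) is measurable with ψ'·κ₃ ∈ L¹(a,b); |𝒢(x) − 𝒢(y)| ≤ κ₄·‖x−y‖ for all x, y ∈ C([a,b],ℝ) with κ₄ ∈ (0,1); f(·,u) is measurable for each u ∈ ℝ; and t ↦ ψ'(t)·f(t,0) is in L¹(a,b). Then S maps C([a,b],ℝ) into itself and for all x, y ∈ C([a,b],ℝ): ‖Sx − Sy‖ ≤ (κ₄ + G_max·∫_a^b ψ'(τ)κ₃(τ) dτ)·‖x−y‖, where G_max = L^{α+β−1}/Γ(α+β). -/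

import Mathlib

/-!
For `τ, t ∈ [a, b]` the Green function is `θ(t) k(ψ(b) - ψ(τ)) - k(ψ(t) - ψ(τ))`, where
`θ(t) = ((ψ(t) - ψ(a)) / L) ^ β` and `k(s) = s₊ ^ (α + β - 1) / Γ(α + β)`. Since `α + β > 1`, the
kernel `k` is continuous, nonnegative and nondecreasing, and `0 ≤ θ ≤ 1`. Both terms therefore lie
in `[0, k(L)]`, so their difference is at most `k(L)` in absolute value: no factor `2` is lost.

The weighted nonlinearity `ψ' f` is a Carathéodory function with integrable Lipschitz constant
`ψ' κ₃`, so it sends continuous functions to integrable ones, Lipschitz from the supremum norm to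
`L¹`. Integrating against the bounded continuous Green function gives continuity by dominated
convergence, and the estimate by adding the boundary term.
-/

open MeasureTheory Set

/-- The Green function of the sequential fractional boundary value problem. -/
noncomputable def G (a b α β : ℝ) (ψ : ℝ → ℝ) (τ t : ℝ) : ℝ :=
  if τ ≤ t then
    (ψ t - ψ a) ^ β * (ψ b - ψ τ) ^ (α + β - 1) /
        (Real.Gamma (α + β) * (ψ b - ψ a) ^ β) -
      (ψ t - ψ τ) ^ (α + β - 1) / Real.Gamma (α + β)
  else
    (ψ t - ψ a) ^ β * (ψ b - ψ τ) ^ (α + β - 1) /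
      (Real.Gamma (α + β) * (ψ b - ψ a) ^ β)

/-- The supremum norm of a function over the interval `[a,b]`. -/
noncomputable def supNorm (a b : ℝ) (x : ℝ → ℝ) : ℝ :=
  ⨆ t : Set.Icc a b, |x ↑t|

/-- The solution operator `S` of the boundary value problem. -/
noncomputable def Sop (a b α β : ℝ) (ψ ψd : ℝ → ℝ) (f : ℝ → ℝ → ℝ)
    (𝒢 : (ℝ → ℝ) → ℝ) (x : ℝ → ℝ) (t : ℝ) : ℝ :=
  ((ψ t - ψ a) / (ψ b - ψ a)) ^ β * 𝒢 x +
    ∫ τ in a..b, G a b α β ψ τ t * ψd τ * f τ (x τ)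

section Superposition

variable {Ω E F : Type*} [MeasurableSpace Ω] {μ : Measure Ω}

lemma aestronglyMeasurable_apply_simpleFunc [TopologicalSpace F]
    [TopologicalSpace.PseudoMetrizableSpace F] {g : Ω → E → F}
    (hg : ∀ u, AEStronglyMeasurable (fun τ => g τ u) μ) (s : SimpleFunc Ω E) :
    AEStronglyMeasurable (fun τ => g τ (s τ)) μ := by
  have hcover : ⋃ u : s.range, s ⁻¹' {(u : E)} = univ :=
    eq_univ_of_forall fun τ => mem_iUnion.2 ⟨⟨s τ, s.mem_range_self τ⟩, rfl⟩
  rw [← Measure.restrict_univ (μ := μ), ← hcover, aestronglyMeasurable_iUnion_iff]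
  refine fun u => (hg u).restrict.congr ?_
  filter_upwards [ae_restrict_mem (s.measurableSet_fiber u)] with τ hτ
  rw [show s τ = u from hτ]

lemma aestronglyMeasurable_apply_of_ae_continuous [TopologicalSpace E] [TopologicalSpace F]
    [TopologicalSpace.PseudoMetrizableSpace F] {g : Ω → E → F} {x : Ω → E}
    (hg : ∀ u, AEStronglyMeasurable (fun τ => g τ u) μ) (hg_cont : ∀ᵐ τ ∂μ, Continuous (g τ))
    (hx : AEStronglyMeasurable x μ) : AEStronglyMeasurable (fun τ => g τ (x τ)) μ := by
  refine aestronglyMeasurable_of_tendsto_ae Filter.atTop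
    (fun n => aestronglyMeasurable_apply_simpleFunc hg (hx.stronglyMeasurable_mk.approx n)) ?_
  filter_upwards [hg_cont, hx.ae_eq_mk] with τ hcont hmk
  rw [hmk]
  exact (hcont.tendsto _).comp (hx.stronglyMeasurable_mk.tendsto_approx τ)

variable [NormedAddCommGroup E] [NormedAddCommGroup F] {g : Ω → E → F} {k : Ω → ℝ} {x y : Ω → E}

lemma integrable_apply_of_ae_lipschitz {C : ℝ}
    (hg : ∀ u, AEStronglyMeasurable (fun τ => g τ u) μ)
    (hg_lip : ∀ᵐ τ ∂μ, ∀ u v, ‖g τ u - g τ v‖ ≤ k τ * ‖u - v‖)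
    (hg_zero : Integrable (fun τ => g τ 0) μ) (hk : Integrable k μ)
    (hx : AEStronglyMeasurable x μ) (hxC : ∀ᵐ τ ∂μ, ‖x τ‖ ≤ C) :
    Integrable (fun τ => g τ (x τ)) μ := by
  have hg_cont : ∀ᵐ τ ∂μ, Continuous (g τ) := by
    filter_upwards [hg_lip] with τ hτ
    refine (LipschitzWith.of_dist_le' (K := k τ) fun u v => ?_).continuous
    simpa only [dist_eq_norm] using hτ u v
  have hgx := aestronglyMeasurable_apply_of_ae_continuous hg hg_cont hx
  have hkx : Integrable (fun τ => k τ * ‖x τ‖) μ := hk.mul_bdd hx.norm (by simpa using hxC)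
  have hsub : Integrable (fun τ => g τ (x τ) - g τ 0) μ := by
    refine hkx.mono' (hgx.sub (hg 0)) ?_
    filter_upwards [hg_lip] with τ hτ
    simpa using hτ (x τ) 0
  simpa only [Pi.add_def, sub_add_cancel] using! hsub.add hg_zero

lemma integral_norm_apply_sub_apply_le {N : ℝ}
    (hg_lip : ∀ᵐ τ ∂μ, ∀ u v, ‖g τ u - g τ v‖ ≤ k τ * ‖u - v‖)
    (hk_nonneg : ∀ᵐ τ ∂μ, 0 ≤ k τ) (hk : Integrable k μ) (hxy : ∀ᵐ τ ∂μ, ‖x τ - y τ‖ ≤ N) :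
    ∫ τ, ‖g τ (x τ) - g τ (y τ)‖ ∂μ ≤ (∫ τ, k τ ∂μ) * N := by
  rw [← integral_mul_const]
  refine integral_mono_of_nonneg (.of_forall fun τ => norm_nonneg _) (hk.mul_const N) ?_
  filter_upwards [hg_lip, hk_nonneg, hxy] with τ hlip hnonneg hN
  exact (hlip _ _).trans (mul_le_mul_of_nonneg_left hN hnonneg)

lemma ae_lipschitz_smul [NormedSpace ℝ F] {f : Ω → E → F} {w κ : Ω → ℝ}
    (hw : ∀ᵐ τ ∂μ, 0 ≤ w τ) (hf : ∀ᵐ τ ∂μ, ∀ u v, ‖f τ u - f τ v‖ ≤ κ τ * ‖u - v‖) :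
    ∀ᵐ τ ∂μ, ∀ u v, ‖w τ • f τ u - w τ • f τ v‖ ≤ w τ * κ τ * ‖u - v‖ := by
  filter_upwards [hw, hf] with τ hwτ hfτ u v
  rw [← smul_sub, norm_smul, Real.norm_of_nonneg hwτ, mul_assoc]
  exact mul_le_mul_of_nonneg_left (hfτ u v) hwτ

end Superposition

section KernelIntegral

variable {Ω T 𝕜 F : Type*} [MeasurableSpace Ω] {μ : Measure Ω} [NormedField 𝕜]
  [NormedAddCommGroup F] [NormedSpace ℝ F] [NormedSpace 𝕜 F] {M : ℝ} {h h₁ h₂ : Ω → F}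

lemma continuousOn_integral_smul_of_bounded [TopologicalSpace T] [FirstCountableTopology T]
    {K : Ω → T → 𝕜} {s : Set T}
    (hK_meas : ∀ t ∈ s, AEStronglyMeasurable (fun τ => K τ t) μ)
    (hK_bound : ∀ t ∈ s, ∀ᵐ τ ∂μ, ‖K τ t‖ ≤ M) (hK_cont : ∀ᵐ τ ∂μ, ContinuousOn (K τ) s)
    (hh : Integrable h μ) : ContinuousOn (fun t => ∫ τ, K τ t • h τ ∂μ) s := by
  refine continuousOn_of_dominated (bound := fun τ => M * ‖h τ‖)
    (fun t ht => (hK_meas t ht).smul hh.aestronglyMeasurable) (fun t ht => ?_)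
    (hh.norm.const_mul M) ?_
  · filter_upwards [hK_bound t ht] with τ hτ
    rw [norm_smul]
    gcongr
  · filter_upwards [hK_cont] with τ hτ
    exact hτ.smul continuousOn_const

lemma norm_integral_smul_sub_integral_smul_le {K : Ω → 𝕜} (hK_meas : AEStronglyMeasurable K μ)
    (hK_bound : ∀ᵐ τ ∂μ, ‖K τ‖ ≤ M) (h₁_int : Integrable h₁ μ) (h₂_int : Integrable h₂ μ) :
    ‖(∫ τ, K τ • h₁ τ ∂μ) - ∫ τ, K τ • h₂ τ ∂μ‖ ≤ M * ∫ τ, ‖h₁ τ - h₂ τ‖ ∂μ := by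
  have hKh₁ : Integrable (fun τ => K τ • h₁ τ) μ := h₁_int.bdd_smul M hK_meas hK_bound
  have hKh₂ : Integrable (fun τ => K τ • h₂ τ) μ := h₂_int.bdd_smul M hK_meas hK_bound
  rw [← integral_sub hKh₁ hKh₂, ← integral_const_mul]
  refine norm_integral_le_of_norm_le ((h₁_int.sub h₂_int).norm.const_mul M) ?_
  filter_upwards [hK_bound] with τ hτ
  rw [← smul_sub, norm_smul]
  gcongr

end KernelIntegral

section SupNorm

variable {a b : ℝ} {x : ℝ → ℝ}

lemma abs_le_supNorm (hx : ContinuousOn x (Icc a b)) {t : ℝ} (ht : t ∈ Icc a b) :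
    |x t| ≤ supNorm a b x := by
  have hbdd : BddAbove (range fun s : Icc a b => |x s|) := by
    simpa only [image_eq_range] using isCompact_Icc.bddAbove_image hx.abs
  exact le_ciSup hbdd ⟨t, ht⟩

lemma supNorm_le (hab : a ≤ b) {C : ℝ} (hC : ∀ t ∈ Icc a b, |x t| ≤ C) : supNorm a b x ≤ C :=
  have : Nonempty (Icc a b) := ⟨⟨a, left_mem_Icc.2 hab⟩⟩
  ciSup_le fun t => hC t t.2

lemma ae_norm_le_supNorm (hx : ContinuousOn x (Icc a b)) :
    ∀ᵐ τ ∂volume.restrict (Ioo a b), ‖x τ‖ ≤ supNorm a b x :=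
  ae_restrict_of_forall_mem measurableSet_Ioo fun _ hτ =>
    abs_le_supNorm hx (Ioo_subset_Icc_self hτ)

end SupNorm

section RiemannLiouvilleKernel

/-- The Riemann–Liouville kernel `s₊ ^ (γ - 1) / Γ(γ)`, extended by zero to `s < 0` through the
positive part. At `s ≤ 0` it is zero only for `γ ≠ 1`, because `0 ^ 0 = 1`. -/
noncomputable def riemannLiouvilleKernel (γ s : ℝ) : ℝ :=
  max s 0 ^ (γ - 1) / Real.Gamma γ

variable {γ s : ℝ}

lemma riemannLiouvilleKernel_of_nonneg (hs : 0 ≤ s) :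
    riemannLiouvilleKernel γ s = s ^ (γ - 1) / Real.Gamma γ := by
  rw [riemannLiouvilleKernel, max_eq_left hs]

lemma riemannLiouvilleKernel_of_nonpos (hγ : γ ≠ 1) (hs : s ≤ 0) :
    riemannLiouvilleKernel γ s = 0 := by
  rw [riemannLiouvilleKernel, max_eq_right hs, Real.zero_rpow (sub_ne_zero.2 hγ), zero_div]

lemma riemannLiouvilleKernel_nonneg (hγ : 0 ≤ γ) : 0 ≤ riemannLiouvilleKernel γ s :=
  div_nonneg (Real.rpow_nonneg (le_max_right _ _) _) (Real.Gamma_nonneg_of_nonneg hγ)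

lemma monotone_riemannLiouvilleKernel (hγ : 1 ≤ γ) : Monotone (riemannLiouvilleKernel γ) :=
  fun _ _ hst => div_le_div_of_nonneg_right
    (Real.rpow_le_rpow (le_max_right _ _) (max_le_max_right 0 hst) (sub_nonneg.2 hγ))
    (Real.Gamma_nonneg_of_nonneg (zero_le_one.trans hγ))

lemma continuous_riemannLiouvilleKernel (hγ : 1 ≤ γ) : Continuous (riemannLiouvilleKernel γ) :=
  ((Real.continuous_rpow_const (sub_nonneg.2 hγ)).comp
    (continuous_id.max continuous_const)).div_const _

end RiemannLiouvilleKernel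

section BoundaryProfile

/-- The coefficient `((ψ(t) - ψ(a)) / (ψ(b) - ψ(a))) ^ β` of the boundary functional in the solution
operator, running from `0` at `a` to `1` at `b`. -/
noncomputable def boundaryProfile (a b β : ℝ) (ψ : ℝ → ℝ) (t : ℝ) : ℝ :=
  ((ψ t - ψ a) / (ψ b - ψ a)) ^ β

variable {a b β t : ℝ} {ψ : ℝ → ℝ}

lemma boundaryProfile_mem_Icc (hβ : 0 ≤ β) (hψ : MonotoneOn ψ (Icc a b)) (ht : t ∈ Icc a b) :
    boundaryProfile a b β ψ t ∈ Icc 0 1 := by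
  have hab : a ≤ b := ht.1.trans ht.2
  have hat : ψ a ≤ ψ t := hψ (left_mem_Icc.2 hab) ht ht.1
  have htb : ψ t ≤ ψ b := hψ ht (right_mem_Icc.2 hab) ht.2
  have hL : 0 ≤ ψ b - ψ a := sub_nonneg.2 (hat.trans htb)
  have hquot : 0 ≤ (ψ t - ψ a) / (ψ b - ψ a) := div_nonneg (sub_nonneg.2 hat) hL
  exact ⟨Real.rpow_nonneg hquot β,
    Real.rpow_le_one hquot (div_le_one_of_le₀ (sub_le_sub_right htb _) hL) hβ⟩

lemma continuousOn_boundaryProfile {s : Set ℝ} (hβ : 0 ≤ β) (hψ : ContinuousOn ψ s) :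
    ContinuousOn (boundaryProfile a b β ψ) s :=
  ((hψ.sub continuousOn_const).div_const _).rpow_const fun _ _ => Or.inr hβ

end BoundaryProfile

section GreenFunction

variable {a b α β τ t : ℝ} {ψ : ℝ → ℝ}

lemma G_eq_boundaryProfile_mul_sub (hαβ : 1 < α + β) (hψ : MonotoneOn ψ (Icc a b))
    (hτ : τ ∈ Icc a b) (ht : t ∈ Icc a b) :
    G a b α β ψ τ t =
      boundaryProfile a b β ψ t * riemannLiouvilleKernel (α + β) (ψ b - ψ τ) -
        riemannLiouvilleKernel (α + β) (ψ t - ψ τ) := by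
  have hab : a ≤ b := ht.1.trans ht.2
  have hat : ψ a ≤ ψ t := hψ (left_mem_Icc.2 hab) ht ht.1
  have hL : ψ a ≤ ψ b := hψ (left_mem_Icc.2 hab) (right_mem_Icc.2 hab) hab
  have hτb : ψ τ ≤ ψ b := hψ hτ (right_mem_Icc.2 hab) hτ.2
  rw [boundaryProfile, Real.div_rpow (sub_nonneg.2 hat) (sub_nonneg.2 hL),
    riemannLiouvilleKernel_of_nonneg (sub_nonneg.2 hτb), div_mul_div_comm,
    mul_comm (_ ^ β) (Real.Gamma _), G]
  split_ifs with hτt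
  · rw [riemannLiouvilleKernel_of_nonneg (sub_nonneg.2 (hψ hτ ht hτt))]
  · rw [riemannLiouvilleKernel_of_nonpos hαβ.ne' (sub_nonpos.2 (hψ ht hτ (not_le.1 hτt).le)),
      sub_zero]

lemma abs_G_le (hβ : 0 ≤ β) (hαβ : 1 < α + β) (hψ : MonotoneOn ψ (Icc a b))
    (hτ : τ ∈ Icc a b) (ht : t ∈ Icc a b) :
    |G a b α β ψ τ t| ≤ riemannLiouvilleKernel (α + β) (ψ b - ψ a) := by
  have hab : a ≤ b := ht.1.trans ht.2
  have haτ : ψ a ≤ ψ τ := hψ (left_mem_Icc.2 hab) hτ hτ.1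
  have htb : ψ t ≤ ψ b := hψ ht (right_mem_Icc.2 hab) ht.2
  obtain ⟨hθ_nonneg, hθ_le_one⟩ := boundaryProfile_mem_Icc hβ hψ ht
  have hk_nonneg {s : ℝ} : 0 ≤ riemannLiouvilleKernel (α + β) s :=
    riemannLiouvilleKernel_nonneg (zero_le_one.trans hαβ.le)
  have hk_mono := monotone_riemannLiouvilleKernel hαβ.le
  rw [G_eq_boundaryProfile_mul_sub hαβ hψ hτ ht]
  refine abs_sub_le_of_nonneg_of_le (mul_nonneg hθ_nonneg hk_nonneg) ?_ hk_nonneg ?_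
  · exact (mul_le_of_le_one_left hk_nonneg hθ_le_one).trans (hk_mono (sub_le_sub_left haτ _))
  · exact hk_mono (sub_le_sub htb haτ)

lemma continuousOn_G_left (hαβ : 1 < α + β) (hψ : MonotoneOn ψ (Icc a b))
    (hψ_cont : ContinuousOn ψ (Icc a b)) (ht : t ∈ Icc a b) :
    ContinuousOn (fun τ => G a b α β ψ τ t) (Icc a b) := by
  have hk := continuous_riemannLiouvilleKernel hαβ.le
  refine ContinuousOn.congr ?_ fun τ hτ => G_eq_boundaryProfile_mul_sub hαβ hψ hτ ht
  exact (continuousOn_const.mul (hk.comp_continuousOn (continuousOn_const.sub hψ_cont))).sub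
    (hk.comp_continuousOn (continuousOn_const.sub hψ_cont))

lemma continuousOn_G_right (hβ : 0 ≤ β) (hαβ : 1 < α + β) (hψ : MonotoneOn ψ (Icc a b))
    (hψ_cont : ContinuousOn ψ (Icc a b)) (hτ : τ ∈ Icc a b) :
    ContinuousOn (G a b α β ψ τ) (Icc a b) := by
  have hk := continuous_riemannLiouvilleKernel hαβ.le
  refine ContinuousOn.congr ?_ fun t ht => G_eq_boundaryProfile_mul_sub hαβ hψ hτ ht
  exact ((continuousOn_boundaryProfile hβ hψ_cont).mul continuousOn_const).sub
    (hk.comp_continuousOn (hψ_cont.sub continuousOn_const))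

lemma aestronglyMeasurable_G_left (hαβ : 1 < α + β) (hψ : MonotoneOn ψ (Icc a b))
    (hψ_cont : ContinuousOn ψ (Icc a b)) (ht : t ∈ Icc a b) :
    AEStronglyMeasurable (fun τ => G a b α β ψ τ t) (volume.restrict (Ioo a b)) :=
  ((continuousOn_G_left hαβ hψ hψ_cont ht).mono Ioo_subset_Icc_self).aestronglyMeasurable
    measurableSet_Ioo

lemma ae_norm_G_le (hβ : 0 ≤ β) (hαβ : 1 < α + β) (hψ : MonotoneOn ψ (Icc a b))
    (ht : t ∈ Icc a b) :
    ∀ᵐ τ ∂volume.restrict (Ioo a b),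
      ‖G a b α β ψ τ t‖ ≤ riemannLiouvilleKernel (α + β) (ψ b - ψ a) :=
  ae_restrict_of_forall_mem measurableSet_Ioo fun _ hτ =>
    abs_G_le hβ hαβ hψ (Ioo_subset_Icc_self hτ) ht

end GreenFunction

section SolutionOperator

variable {a b α β t : ℝ} {ψ ψd : ℝ → ℝ} {f : ℝ → ℝ → ℝ} {𝒢 : (ℝ → ℝ) → ℝ} {x y : ℝ → ℝ}

lemma Sop_eq_boundaryProfile_mul_add_setIntegral (hab : a ≤ b) :
    Sop a b α β ψ ψd f 𝒢 x t = boundaryProfile a b β ψ t * 𝒢 x +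
      ∫ τ in Ioo a b, G a b α β ψ τ t • (ψd τ * f τ (x τ)) := by
  simp only [Sop, boundaryProfile, smul_eq_mul, mul_assoc, intervalIntegral.integral_of_le hab,
    integral_Ioc_eq_integral_Ioo]

lemma continuousOn_Sop (hab : a ≤ b) (hβ : 0 ≤ β) (hαβ : 1 < α + β)
    (hψ : MonotoneOn ψ (Icc a b)) (hψ_cont : ContinuousOn ψ (Icc a b))
    (hx : IntegrableOn (fun τ => ψd τ * f τ (x τ)) (Ioo a b)) :
    ContinuousOn (Sop a b α β ψ ψd f 𝒢 x) (Icc a b) := by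
  have hintegral := continuousOn_integral_smul_of_bounded
    (fun _ ht => aestronglyMeasurable_G_left hαβ hψ hψ_cont ht)
    (fun _ ht => ae_norm_G_le hβ hαβ hψ ht)
    (ae_restrict_of_forall_mem measurableSet_Ioo fun _ hτ =>
      continuousOn_G_right hβ hαβ hψ hψ_cont (Ioo_subset_Icc_self hτ)) hx
  exact (((continuousOn_boundaryProfile hβ hψ_cont).mul continuousOn_const).add hintegral).congr
    fun _ _ => Sop_eq_boundaryProfile_mul_add_setIntegral hab

lemma abs_Sop_sub_Sop_le (hβ : 0 ≤ β) (hαβ : 1 < α + β)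
    (hψ : MonotoneOn ψ (Icc a b)) (hψ_cont : ContinuousOn ψ (Icc a b))
    (hx : IntegrableOn (fun τ => ψd τ * f τ (x τ)) (Ioo a b))
    (hy : IntegrableOn (fun τ => ψd τ * f τ (y τ)) (Ioo a b)) (ht : t ∈ Icc a b) :
    |Sop a b α β ψ ψd f 𝒢 x t - Sop a b α β ψ ψd f 𝒢 y t| ≤
      |𝒢 x - 𝒢 y| + riemannLiouvilleKernel (α + β) (ψ b - ψ a) *
        ∫ τ in Ioo a b, ‖ψd τ * f τ (x τ) - ψd τ * f τ (y τ)‖ := by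
  obtain ⟨hθ_nonneg, hθ_le_one⟩ := boundaryProfile_mem_Icc hβ hψ ht
  have hboundary : |boundaryProfile a b β ψ t * (𝒢 x - 𝒢 y)| ≤ |𝒢 x - 𝒢 y| := by
    rw [abs_mul, abs_of_nonneg hθ_nonneg]
    exact mul_le_of_le_one_left (abs_nonneg _) hθ_le_one
  have hintegral := norm_integral_smul_sub_integral_smul_le
    (aestronglyMeasurable_G_left hαβ hψ hψ_cont ht) (ae_norm_G_le hβ hαβ hψ ht) hx hy
  rw [Sop_eq_boundaryProfile_mul_add_setIntegral (ht.1.trans ht.2),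
    Sop_eq_boundaryProfile_mul_add_setIntegral (ht.1.trans ht.2), add_sub_add_comm, ← mul_sub]
  exact (abs_add_le _ _).trans (add_le_add hboundary hintegral)

end SolutionOperator

section Derivative

lemma strictMonoOn_Icc_of_hasDerivAt_pos {a b : ℝ} {ψ ψd : ℝ → ℝ}
    (hψ_cont : ContinuousOn ψ (Icc a b))
    (hψ : ∀ t ∈ Ioo a b, HasDerivAt ψ (ψd t) t) (hψd_pos : ∀ t ∈ Ioo a b, 0 < ψd t) :
    StrictMonoOn ψ (Icc a b) := by
  refine strictMonoOn_of_deriv_pos (convex_Icc a b) hψ_cont fun t ht => ?_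
  rw [interior_Icc] at ht
  exact (hψ t ht).deriv ▸ hψd_pos t ht

lemma aestronglyMeasurable_of_hasDerivAt {F : Type*} [NormedAddCommGroup F] [NormedSpace ℝ F]
    [CompleteSpace F] {ψ ψd : ℝ → F} {μ : Measure ℝ} {s : Set ℝ} (hs : MeasurableSet s)
    (hψ : ∀ t ∈ s, HasDerivAt ψ (ψd t) t) : AEStronglyMeasurable ψd (μ.restrict s) :=
  (aestronglyMeasurable_deriv ψ _).congr
    (ae_restrict_of_forall_mem hs fun t ht => (hψ t ht).deriv)

end Derivative

theorem solution_operator_contraction_estimate_general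
    {a b α β κ₄ : ℝ} (hab : a < b) (hβ : 0 < β) (hαβ : 1 < α + β) {ψ ψd : ℝ → ℝ}
    (hψ_cont : ContinuousOn ψ (Icc a b)) (hψ : ∀ t ∈ Ioo a b, HasDerivAt ψ (ψd t) t)
    (hψd_pos : ∀ t ∈ Ioo a b, 0 < ψd t)
    {f : ℝ → ℝ → ℝ} {𝒢 : (ℝ → ℝ) → ℝ} {κ₃ : ℝ → ℝ} (hκ₃_nonneg : ∀ t ∈ Ioo a b, 0 ≤ κ₃ t)
    (hκ₃_int : IntervalIntegrable (fun t => ψd t * κ₃ t) volume a b)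
    (hf_lip : ∀ t ∈ Ioo a b, ∀ u v : ℝ, |f t u - f t v| ≤ κ₃ t * |u - v|)
    (h𝒢_lip : ∀ x y : ℝ → ℝ, ContinuousOn x (Icc a b) → ContinuousOn y (Icc a b) →
      |𝒢 x - 𝒢 y| ≤ κ₄ * supNorm a b (fun t => x t - y t))
    (hf_meas : ∀ u : ℝ, AEStronglyMeasurable (fun t => f t u) (volume.restrict (Ioo a b)))
    (hf0_int : IntervalIntegrable (fun t => ψd t * f t 0) volume a b) :
    (∀ x : ℝ → ℝ, ContinuousOn x (Icc a b) →
      ContinuousOn (Sop a b α β ψ ψd f 𝒢 x) (Icc a b)) ∧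
    ∀ x y : ℝ → ℝ, ContinuousOn x (Icc a b) → ContinuousOn y (Icc a b) →
      supNorm a b (fun t => Sop a b α β ψ ψd f 𝒢 x t - Sop a b α β ψ ψd f 𝒢 y t) ≤
        (κ₄ + (ψ b - ψ a) ^ (α + β - 1) / Real.Gamma (α + β) *
          ∫ τ in a..b, ψd τ * κ₃ τ) * supNorm a b (fun t => x t - y t) := by
  have hmono : MonotoneOn ψ (Icc a b) :=
    (strictMonoOn_Icc_of_hasDerivAt_pos hψ_cont hψ hψd_pos).monotoneOn
  have hL : 0 ≤ ψ b - ψ a :=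
    sub_nonneg.2 (hmono (left_mem_Icc.2 hab.le) (right_mem_Icc.2 hab.le) hab.le)
  rw [intervalIntegrable_iff_integrableOn_Ioo_of_le hab.le] at hκ₃_int hf0_int
  have hψd_nonneg := ae_restrict_of_forall_mem (μ := volume) measurableSet_Ioo
    fun τ hτ => (hψd_pos τ hτ).le
  have hk_nonneg := ae_restrict_of_forall_mem (μ := volume) measurableSet_Ioo
    fun τ hτ => mul_nonneg (hψd_pos τ hτ).le (hκ₃_nonneg τ hτ)
  have hlip : ∀ᵐ τ ∂volume.restrict (Ioo a b), ∀ u v : ℝ,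
      ‖ψd τ * f τ u - ψd τ * f τ v‖ ≤ ψd τ * κ₃ τ * ‖u - v‖ :=
    ae_lipschitz_smul hψd_nonneg (f := f) (ae_restrict_of_forall_mem measurableSet_Ioo hf_lip)
  have hmeas (u : ℝ) := (aestronglyMeasurable_of_hasDerivAt measurableSet_Ioo hψ).mul (hf_meas u)
  have hint (x : ℝ → ℝ) (hx : ContinuousOn x (Icc a b)) :
      IntegrableOn (fun τ => ψd τ * f τ (x τ)) (Ioo a b) :=
    integrable_apply_of_ae_lipschitz (g := fun τ u => ψd τ * f τ u) hmeas hlip hf0_int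
      hκ₃_int ((hx.mono Ioo_subset_Icc_self).aestronglyMeasurable measurableSet_Ioo)
      (ae_norm_le_supNorm hx)
  refine ⟨fun x hx => continuousOn_Sop hab.le hβ.le hαβ hmono hψ_cont (hint x hx),
    fun x y hx hy => supNorm_le hab.le fun t ht => ?_⟩
  have hL1 := integral_norm_apply_sub_apply_le (g := fun τ u => ψd τ * f τ u) hlip hk_nonneg
    hκ₃_int (ae_norm_le_supNorm (hx.sub hy))
  rw [intervalIntegral.integral_of_le hab.le, integral_Ioc_eq_integral_Ioo,
    ← riemannLiouvilleKernel_of_nonneg hL, add_mul, mul_assoc]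
  exact (abs_Sop_sub_Sop_le hβ.le hαβ hmono hψ_cont (hint x hx) (hint y hy) ht).trans
    (add_le_add (h𝒢_lip x y hx hy) (mul_le_mul_of_nonneg_left hL1
      (riemannLiouvilleKernel_nonneg (zero_le_one.trans hαβ.le))))

theorem solution_operator_contraction_estimate
    (a b α β κ₄ : ℝ) (hab : a < b)
    (hα0 : 0 < α) (hα1 : α ≤ 1) (hβ0 : 0 < β) (hβ1 : β ≤ 1) (hαβ : 1 < α + β)
    (ψ ψd : ℝ → ℝ)
    (hψ : ∀ t ∈ Set.Icc a b, HasDerivAt ψ (ψd t) t)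
    (hψd_cont : ContinuousOn ψd (Set.Icc a b))
    (hψd_pos : ∀ t ∈ Set.Icc a b, 0 < ψd t)
    (f : ℝ → ℝ → ℝ) (𝒢 : (ℝ → ℝ) → ℝ) (κ₃ : ℝ → ℝ)
    (hκ₃_meas : AEStronglyMeasurable κ₃ (volume.restrict (Set.Ioo a b)))
    (hκ₃_nonneg : ∀ t ∈ Set.Ioo a b, 0 ≤ κ₃ t)
    (hκ₃_int : IntervalIntegrable (fun t => ψd t * κ₃ t) volume a b)
    (hf_lip : ∀ t ∈ Set.Ioo a b, ∀ u v : ℝ, |f t u - f t v| ≤ κ₃ t * |u - v|)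
    (hκ₄0 : 0 < κ₄) (hκ₄1 : κ₄ < 1)
    (h𝒢_lip : ∀ x y : ℝ → ℝ, ContinuousOn x (Set.Icc a b) →
      ContinuousOn y (Set.Icc a b) →
      |𝒢 x - 𝒢 y| ≤ κ₄ * supNorm a b (fun t => x t - y t))
    (hf_meas : ∀ u : ℝ,
      AEStronglyMeasurable (fun t => f t u) (volume.restrict (Set.Ioo a b)))
    (hf0_int : IntervalIntegrable (fun t => ψd t * f t 0) volume a b) :
    (∀ x : ℝ → ℝ, ContinuousOn x (Set.Icc a b) →
      ContinuousOn (Sop a b α β ψ ψd f 𝒢 x) (Set.Icc a b)) ∧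
    ∀ x y : ℝ → ℝ, ContinuousOn x (Set.Icc a b) → ContinuousOn y (Set.Icc a b) →
      supNorm a b (fun t => Sop a b α β ψ ψd f 𝒢 x t - Sop a b α β ψ ψd f 𝒢 y t) ≤
        (κ₄ + (ψ b - ψ a) ^ (α + β - 1) / Real.Gamma (α + β) *
          ∫ τ in a..b, ψd τ * κ₃ τ) * supNorm a b (fun t => x t - y t) :=
  solution_operator_contraction_estimate_general hab hβ0 hαβ
    (fun t ht => (hψ t ht).continuousAt.continuousWithinAt)
    (fun t ht => hψ t (Ioo_subset_Icc_self ht)) (fun t ht => hψd_pos t (Ioo_subset_Icc_self ht))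
    hκ₃_nonneg hκ₃_int hf_lip h𝒢_lip hf_meas hf0_int
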